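/- Fix a point x ∈ T and an integer k ≥ 1. Then there exist constants C > 0 and ρ ∈ (0, 1) such that for all integers N ≥ k: |E[D_k(N)] − (1/√π) · (Γ(k + 1/2)/Γ(k)) · (Γ(N + 1)/Γ(N + 3/2))| ≤ C·ρ^N. In particular, on the flat torus the k-dependence and N-dependence of the expected k-th nearest-neighbor distance separate to all orders in 1/N. -/

import Mathlib

open MeasureTheory Filter

noncomputable section

/-- The `k`-th smallest value (1-indexed) among the `N` real numbers `f 0, …, f (N-1)`. -/
def kthVal {N : ℕ} (k : ℕ) (f : Fin N → ℝ) : ℝ :=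
  (((Finset.univ : Finset (Fin N)).val.map f).sort (· ≤ ·)).getD (k - 1) 0

/-- The integer lattice `ℤ² ⊂ ℝ²` (with the Euclidean norm). -/
def TorusLattice : AddSubgroup (EuclideanSpace ℝ (Fin 2)) where
  carrier := {v | ∀ i, ∃ m : ℤ, v i = (m : ℝ)}
  zero_mem' := fun i => ⟨0, by simp⟩
  add_mem' := by
    rintro a b ha hb i
    obtain ⟨m, hm⟩ := ha i
    obtain ⟨m', hm'⟩ := hb i
    exact ⟨m + m', by simp [PiLp.add_apply, hm, hm']⟩
  neg_mem' := by
    rintro a ha i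
    obtain ⟨m, hm⟩ := ha i
    exact ⟨-m, by simp [PiLp.neg_apply, hm]⟩

/-- The flat unit torus `ℝ²/ℤ²`, carrying the quotient (semi)norm, whose induced distance is
`d(x, y) = min {‖x̃ − ỹ + m‖ : m ∈ ℤ²}` with `‖·‖` the Euclidean norm. -/
abbrev Torus := EuclideanSpace ℝ (Fin 2) ⧸ TorusLattice

instance : MeasurableSpace Torus := borel _
instance : BorelSpace Torus := ⟨rfl⟩

/-- The Haar probability measure on the flat unit torus: the pushforward of Lebesgue measure
on the unit square `[0,1)²` under the quotient map. -/
def torusMeasure : Measure Torus :=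
  Measure.map (QuotientAddGroup.mk' TorusLattice)
    (volume.restrict {v : EuclideanSpace ℝ (Fin 2) | ∀ i, v i ∈ Set.Ico (0:ℝ) 1})

/-!
Among the sites, `D_k ≥ t` exactly when fewer than `k` of them lie in the open ball of radius `t`
about `x`, so `E[D_k] = ∫₀^∞ P(Bin(N, F(t)) < k) dt`, where `F(t)` is the measure of that ball.
For `t ≤ 1/2` the ball does not overlap its lattice translates and `F(t) = π t²`.
For larger `t` the integrand is exponentially small in `N` by Chernoff's bound, so replacing `F(t)`
by `min (π t²) 1` costs an exponentially small error. After this replacement and the substitution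
`s = √π t`, the integral is `π^(-1/2) ∫₀¹ P(Bin(N, s²) < k) ds`. Integrating by parts shows that
passing from `k` to `k + 1` multiplies this integral by `(k + 1/2) / k`, and for `k = N + 1` the
integrand is `1`; hence the Gamma quotients.
-/

section OrderStatistic

theorem le_getElem_iff_countP_lt_le {α : Type*} [LinearOrder α] {l : List α}
    (hl : l.Pairwise (· ≤ ·)) {i : ℕ} (hi : i < l.length) (r : α) :
    r ≤ l[i] ↔ l.countP (· < r) ≤ i := by
  have mono {a b : ℕ} (hb : b < l.length) (hab : a ≤ b) : l[a] ≤ l[b] :=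
    hl.rel_get_of_le (a := ⟨a, hab.trans_lt hb⟩) (b := ⟨b, hb⟩) hab
  constructor
  · intro hr
    have hdrop : (l.drop i).countP (· < r) = 0 := by
      refine List.countP_eq_zero.2 fun a ha => ?_
      obtain ⟨j, hj, rfl⟩ := List.mem_iff_getElem.1 ha
      simpa using hr.trans (mono _ (Nat.le_add_right i j))
    calc l.countP (· < r)
        = (l.take i).countP (· < r) + (l.drop i).countP (· < r) := by
          rw [← List.countP_append, List.take_append_drop]
      _ ≤ i := by
          rw [hdrop, add_zero]
          exact List.countP_le_length.trans (List.length_take_le i l)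
  · contrapose!
    intro hr
    have htake : (l.take (i + 1)).countP (· < r) = (l.take (i + 1)).length := by
      refine List.countP_eq_length.2 fun a ha => ?_
      obtain ⟨j, hj, rfl⟩ := List.mem_iff_getElem.1 ha
      rw [List.length_take] at hj
      simpa using (mono hi (by omega)).trans_lt hr
    calc i < (l.take (i + 1)).length := by rw [List.length_take]; omega
      _ = (l.take (i + 1)).countP (· < r) := htake.symm
      _ ≤ l.countP (· < r) := (List.take_sublist _ l).countP_le

variable {N k : ℕ}

theorem length_sort_map_univ (f : Fin N → ℝ) :
    (((Finset.univ : Finset (Fin N)).val.map f).sort (· ≤ ·)).length = N := by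
  simp

theorem le_kthVal_iff (hk : 1 ≤ k) (hkN : k ≤ N) (f : Fin N → ℝ) (r : ℝ) :
    r ≤ kthVal k f ↔ {i | f i < r}.ncard < k := by
  have hlen : k - 1 < (((Finset.univ : Finset (Fin N)).val.map f).sort (· ≤ ·)).length := by
    rw [length_sort_map_univ]
    omega
  have hcount : (((Finset.univ : Finset (Fin N)).val.map f).sort (· ≤ ·)).countP (· < r) =
      {i | f i < r}.ncard := by
    rw [← Multiset.coe_countP, Multiset.sort_eq, Multiset.countP_map, Set.ncard_eq_toFinset_card',
      Set.toFinset_ofPred]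
    rfl
  rw [kthVal, List.getD_eq_getElem _ _ hlen,
    le_getElem_iff_countP_lt_le (Multiset.pairwise_sort _ _), hcount]
  omega

theorem kthVal_mem_range (hk : 1 ≤ k) (hkN : k ≤ N) (f : Fin N → ℝ) :
    kthVal k f ∈ Set.range f := by
  have hlen : k - 1 < (((Finset.univ : Finset (Fin N)).val.map f).sort (· ≤ ·)).length := by
    rw [length_sort_map_univ]
    omega
  have hmem := List.getElem_mem hlen
  rw [← List.getD_eq_getElem _ 0 hlen, Multiset.mem_sort, Multiset.mem_map] at hmem
  obtain ⟨i, -, hi⟩ := hmem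
  exact ⟨i, hi⟩

theorem measurable_kthVal (hk : 1 ≤ k) (hkN : k ≤ N) :
    Measurable (kthVal k : (Fin N → ℝ) → ℝ) := by
  refine measurable_of_Ici fun r => ?_
  have hpre : (kthVal k : (Fin N → ℝ) → ℝ) ⁻¹' Set.Ici r = {f | {i | f i < r}.ncard < k} :=
    Set.ext fun f => le_kthVal_iff hk hkN f r
  rw [hpre]
  have hmeas : Measurable fun f : Fin N → ℝ => {i | f i < r} :=
    measurable_set_iff.2 fun i =>
      measurableSet_setOfPred.1 (measurableSet_lt (measurable_pi_apply i) measurable_const)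
  exact measurableSet_lt (measurable_ncard.comp hmeas) measurable_const

end OrderStatistic
section BernsteinTail

open Polynomial

/-- The polynomial whose value at `p` is `P(Bin(N, p) < k)`: the probability that fewer than `k` of
`N` independent events of probability `p` occur. -/
def bernsteinTail (k N : ℕ) : ℝ[X] :=
  ∑ j ∈ Finset.range k, bernsteinPolynomial ℝ N j

variable {k N : ℕ} {p : ℝ}

theorem bernsteinTail_succ_self (N : ℕ) : bernsteinTail (N + 1) N = 1 :=
  bernsteinPolynomial.sum ℝ N

theorem bernsteinTail_eval_one (hkN : k ≤ N) : (bernsteinTail k N).eval 1 = 0 := by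
  rw [bernsteinTail, eval_finsetSum]
  refine Finset.sum_eq_zero fun j hj => ?_
  rw [bernsteinPolynomial.eval_at_1, if_neg ((Finset.mem_range.1 hj).trans_le hkN).ne]

theorem derivative_bernsteinTail_succ (k N : ℕ) :
    derivative (bernsteinTail (k + 1) N) = -((N : ℝ[X]) * bernsteinPolynomial ℝ (N - 1) k) := by
  induction k with
  | zero => simp [bernsteinTail, bernsteinPolynomial.derivative_zero]
  | succ k ih =>
    rw [bernsteinTail, Finset.sum_range_succ, derivative_add, ← bernsteinTail, ih,
      bernsteinPolynomial.derivative_succ]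
    ring

theorem X_mul_derivative_bernsteinTail (k N : ℕ) :
    X * derivative (bernsteinTail k N) = -((k : ℝ[X]) * bernsteinPolynomial ℝ N k) := by
  rcases k with _ | k
  · simp [bernsteinTail]
  rcases N with _ | N
  · simp [derivative_bernsteinTail_succ, bernsteinPolynomial]
  have hchoose : ((N + 1 : ℕ) : ℝ[X]) * N.choose k = (N + 1).choose (k + 1) * (k + 1 : ℕ) := by
    exact_mod_cast Nat.add_one_mul_choose_eq N k
  rw [derivative_bernsteinTail_succ, bernsteinPolynomial, bernsteinPolynomial,
    Nat.add_sub_cancel, Nat.add_sub_add_right]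
  linear_combination -(X ^ (k + 1) * (1 - X) ^ (N - k)) * hchoose

theorem bernsteinPolynomial_eval_nonneg (hp : p ∈ Set.Icc 0 1) (N j : ℕ) :
    0 ≤ (bernsteinPolynomial ℝ N j).eval p := by
  have h0 : 0 ≤ p := hp.1
  have h1 : 0 ≤ 1 - p := sub_nonneg.2 hp.2
  simp only [bernsteinPolynomial, eval_mul, eval_pow, eval_sub, eval_natCast, eval_X, eval_one]
  positivity

theorem bernsteinTail_eval_nonneg (hp : p ∈ Set.Icc 0 1) (k N : ℕ) :
    0 ≤ (bernsteinTail k N).eval p := by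
  rw [bernsteinTail, eval_finsetSum]
  exact Finset.sum_nonneg fun j _ => bernsteinPolynomial_eval_nonneg hp N j

theorem antitoneOn_bernsteinTail (k N : ℕ) :
    AntitoneOn (fun p => (bernsteinTail k N).eval p) (Set.Icc 0 1) := by
  refine antitoneOn_of_deriv_nonpos (convex_Icc 0 1) (by fun_prop) (by fun_prop) fun p hp => ?_
  rw [interior_Icc] at hp
  have hderiv : p * (derivative (bernsteinTail k N)).eval p =
      -(k * (bernsteinPolynomial ℝ N k).eval p) := by
    simpa using congrArg (eval p) (X_mul_derivative_bernsteinTail k N)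
  have hnonneg := bernsteinPolynomial_eval_nonneg (Set.Ioo_subset_Icc_self hp) N k
  rw [Polynomial.deriv]
  refine nonpos_of_mul_nonpos_right (a := p) ?_ hp.1
  rw [hderiv, neg_nonpos]
  positivity

theorem pow_mul_bernsteinTail_eval_le (hp : p ∈ Set.Icc 0 1) {z : ℝ} (hz : z ∈ Set.Icc 0 1)
    (hkN : k ≤ N) : z ^ k * (bernsteinTail k N).eval p ≤ (1 - p + z * p) ^ N := by
  -- Chernoff's method: if `S ∼ Bin(N, p)` then `z ^ k * 1_{S < k} ≤ z ^ S`, and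
  -- `E[z ^ S] = (1 - p + z * p) ^ N`.
  have hb (j : ℕ) := bernsteinPolynomial_eval_nonneg hp N j
  calc z ^ k * (bernsteinTail k N).eval p
      = ∑ j ∈ Finset.range k, z ^ k * (bernsteinPolynomial ℝ N j).eval p := by
        rw [bernsteinTail, eval_finsetSum, Finset.mul_sum]
    _ ≤ ∑ j ∈ Finset.range k, z ^ j * (bernsteinPolynomial ℝ N j).eval p :=
        Finset.sum_le_sum fun j hj => mul_le_mul_of_nonneg_right
          (pow_le_pow_of_le_one hz.1 hz.2 (Finset.mem_range.1 hj).le) (hb j)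
    _ ≤ ∑ j ∈ Finset.range (N + 1), z ^ j * (bernsteinPolynomial ℝ N j).eval p :=
        Finset.sum_le_sum_of_subset_of_nonneg (Finset.range_mono (by omega))
          fun j _ _ => mul_nonneg (pow_nonneg hz.1 j) (hb j)
    _ = (1 - p + z * p) ^ N := by
        rw [add_comm (1 - p), add_pow]
        refine Finset.sum_congr rfl fun j _ => ?_
        simp only [bernsteinPolynomial, eval_mul, eval_pow, eval_sub, eval_natCast, eval_X,
          eval_one]
        ring

variable {δ : ℝ}

theorem integral_bernsteinTail_rpow_eq (hkN : k ≤ N) (hδ : 0 < δ) :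
    ∫ s in (0 : ℝ)..1, (bernsteinTail k N).eval (s ^ δ) =
      δ * k * ∫ s in (0 : ℝ)..1, (bernsteinPolynomial ℝ N k).eval (s ^ δ) := by
  have hpow : Continuous fun s : ℝ => s ^ δ := Real.continuous_rpow_const hδ.le
  have htail : Continuous fun s : ℝ => (bernsteinTail k N).eval (s ^ δ) :=
    (bernsteinTail k N).continuous.comp hpow
  have hterm : Continuous fun s : ℝ => δ * k * (bernsteinPolynomial ℝ N k).eval (s ^ δ) :=
    ((bernsteinPolynomial ℝ N k).continuous.comp hpow).const_mul _
  have hderiv : ∀ s ∈ Set.Ioo (0 : ℝ) 1,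
      HasDerivAt (fun s => s * (bernsteinTail k N).eval (s ^ δ))
        ((bernsteinTail k N).eval (s ^ δ) -
          δ * k * (bernsteinPolynomial ℝ N k).eval (s ^ δ)) s := by
    intro s hs
    have hX : s ^ δ * (derivative (bernsteinTail k N)).eval (s ^ δ) =
        -(k * (bernsteinPolynomial ℝ N k).eval (s ^ δ)) := by
      simpa using congrArg (eval (s ^ δ)) (X_mul_derivative_bernsteinTail k N)
    have hs' : s * s ^ (δ - 1) = s ^ δ := by
      rw [← Real.rpow_one_add' hs.1.le (by simpa using hδ.ne'), add_sub_cancel]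
    refine ((hasDerivAt_id s).mul (((bernsteinTail k N).hasDerivAt (s ^ δ)).comp s
      (Real.hasDerivAt_rpow_const (.inl hs.1.ne')))).congr_deriv ?_
    simp only [id, Function.comp_apply]
    linear_combination δ * hX + δ * (derivative (bernsteinTail k N)).eval (s ^ δ) * hs'
  have hftc := intervalIntegral.integral_eq_sub_of_hasDerivAt_of_le zero_le_one
    (continuous_id.mul htail).continuousOn hderiv ((htail.sub hterm).intervalIntegrable 0 1)
  rw [intervalIntegral.integral_sub (htail.intervalIntegrable 0 1) (hterm.intervalIntegrable 0 1),
    intervalIntegral.integral_const_mul] at hftc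
  simpa [bernsteinTail_eval_one hkN, sub_eq_zero] using hftc

theorem integral_bernsteinTail_succ_rpow (hkN : k ≤ N) (hδ : 0 < δ) :
    k * ∫ s in (0 : ℝ)..1, (bernsteinTail (k + 1) N).eval (s ^ δ) =
      (k + 1 / δ) * ∫ s in (0 : ℝ)..1, (bernsteinTail k N).eval (s ^ δ) := by
  have hpow : Continuous fun s : ℝ => s ^ δ := Real.continuous_rpow_const hδ.le
  have hsucc : ∫ s in (0 : ℝ)..1, (bernsteinTail (k + 1) N).eval (s ^ δ) =
      (∫ s in (0 : ℝ)..1, (bernsteinTail k N).eval (s ^ δ)) +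
        ∫ s in (0 : ℝ)..1, (bernsteinPolynomial ℝ N k).eval (s ^ δ) := by
    simp only [bernsteinTail, Finset.sum_range_succ, eval_add]
    exact intervalIntegral.integral_add
      ((Polynomial.continuous _).comp hpow |>.intervalIntegrable 0 1)
      ((Polynomial.continuous _).comp hpow |>.intervalIntegrable 0 1)
  rw [hsucc, integral_bernsteinTail_rpow_eq hkN hδ]
  field_simp

theorem integral_bernsteinTail_rpow (hk : 1 ≤ k) (hkN : k ≤ N + 1) (hδ : 0 < δ) :
    ∫ s in (0 : ℝ)..1, (bernsteinTail k N).eval (s ^ δ) =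
      Real.Gamma (k + 1 / δ) / Real.Gamma k *
        (Real.Gamma (N + 1) / Real.Gamma (N + 1 + 1 / δ)) := by
  have hδ' : 0 < 1 / δ := one_div_pos.2 hδ
  refine Nat.decreasingInduction' (P := fun k => ∫ s in (0 : ℝ)..1,
    (bernsteinTail k N).eval (s ^ δ) = Real.Gamma (k + 1 / δ) / Real.Gamma k *
      (Real.Gamma (N + 1) / Real.Gamma (N + 1 + 1 / δ))) (fun j hjN hkj ih => ?_) hkN ?_
  · have hj : (0 : ℝ) < j := by exact_mod_cast hk.trans hkj
    have hjδ : (j + 1 / δ : ℝ) ≠ 0 := (add_pos hj hδ').ne'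
    have hrec := integral_bernsteinTail_succ_rpow (Nat.lt_succ_iff.1 hjN) hδ
    rw [ih, Nat.cast_add_one, add_right_comm, Real.Gamma_add_one hjδ,
      Real.Gamma_add_one hj.ne'] at hrec
    refine mul_left_cancel₀ hjδ ?_
    rw [← hrec]
    field_simp
  · have hN : (0 : ℝ) < N + 1 := N.cast_add_one_pos
    simp only [bernsteinTail_succ_self, eval_one, Nat.cast_add_one,
      intervalIntegral.integral_const, sub_zero, one_smul]
    rw [div_mul_div_cancel₀ (Real.Gamma_pos_of_pos hN).ne',
      div_self (Real.Gamma_pos_of_pos (add_pos hN hδ')).ne']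

end BernsteinTail

section BinomialLaw

open unitInterval ProbabilityTheory

variable {ι α : Type*} [MeasurableSpace α] {A : Set α}

theorem measurable_setOf_mem (hA : MeasurableSet A) :
    Measurable fun ω : ι → α => {i | ω i ∈ A} :=
  measurable_set_iff.2 fun i => hA.mem.comp (measurable_pi_apply i)

variable {μ : Measure α} [IsProbabilityMeasure μ] {p : I}

theorem map_mem_eq_smul_dirac_add (hA : MeasurableSet A) (hp : μ.real A = p) :
    μ.map (· ∈ A) = toNNReal p • Measure.dirac True + toNNReal (σ p) • Measure.dirac False := by
  refine Measure.ext_of_measureReal_singleton fun q => ?_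
  rw [map_measureReal_apply hA.mem (measurableSet_singleton q), measureReal_add_apply,
    measureReal_nnreal_smul_apply, measureReal_nnreal_smul_apply]
  by_cases hq : q
  · have hpre : (· ∈ A) ⁻¹' {q} = A := by ext; simp [hq]
    rw [hpre, hp]
    simp [hq, Measure.real]
  · have hpre : (· ∈ A) ⁻¹' {q} = Aᶜ := by ext; simp [hq]
    rw [hpre, probReal_compl_eq_one_sub hA, hp]
    simp [hq, Measure.real]

variable [Fintype ι]

theorem map_pi_setOf_mem_eq_setBernoulli (hA : MeasurableSet A) (hp : μ.real A = p) :
    (Measure.pi fun _ : ι => μ).map (fun ω => {i | ω i ∈ A}) = setBernoulli Set.univ p := by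
  rw [setBernoulli_eq_map]
  simp only [Set.mem_univ, ← map_mem_eq_smul_dirac_add hA hp]
  rw [← Measure.infinitePi_map_pi _ fun _ => hA.mem, Measure.infinitePi_eq_pi, Measure.map_map]
  · rfl
  · exact measurable_set_iff.2 measurable_pi_apply
  · exact measurable_pi_lambda _ fun i => hA.mem.comp (measurable_pi_apply i)

theorem measureReal_pi_ncard_lt (hA : MeasurableSet A) (k : ℕ) :
    (Measure.pi fun _ : ι => μ).real {ω | {i | ω i ∈ A}.ncard < k} =
      (bernsteinTail k (Fintype.card ι)).eval (μ.real A) := by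
  let p : I := ⟨μ.real A, measureReal_nonneg, measureReal_le_one⟩
  have hcount : Measurable fun ω : ι → α => {i | ω i ∈ A}.ncard :=
    measurable_ncard.comp (measurable_setOf_mem hA)
  have hlaw : (Measure.pi fun _ : ι => μ).map (fun ω => {i | ω i ∈ A}.ncard) =
      (setBernoulli (Set.univ : Set ι) p).map Set.ncard := by
    rw [← map_pi_setOf_mem_eq_setBernoulli hA rfl,
      Measure.map_map measurable_ncard (measurable_setOf_mem hA)]
    rfl
  calc (Measure.pi fun _ : ι => μ).real {ω | {i | ω i ∈ A}.ncard < k}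
      = ((setBernoulli (Set.univ : Set ι) p).map Set.ncard).real (Finset.range k : Set ℕ) := by
        rw [← hlaw, map_measureReal_apply hcount (Finset.measurableSet _)]
        congr 1
        ext
        simp
    _ = ∑ j ∈ Finset.range k, ((setBernoulli (Set.univ : Set ι) p).map Set.ncard).real {j} :=
        (sum_measureReal_singleton _).symm
    _ = (bernsteinTail k (Fintype.card ι)).eval (μ.real A) := by
        rw [bernsteinTail, Polynomial.eval_finsetSum]
        refine Finset.sum_congr rfl fun j _ => ?_
        rw [map_ncard_setBernoulli_real_singleton Set.finite_univ]
        simp [bernsteinPolynomial, p, Set.ncard_univ]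

end BinomialLaw

section Expectation

variable {α : Type*} [MeasurableSpace α] {μ : Measure α} [IsProbabilityMeasure μ] {g : α → ℝ}
  {R : ℝ} {k N : ℕ}

theorem integral_kthVal_eq_integral_bernsteinTail (hg : Measurable g)
    (hgR : ∀ a, g a ∈ Set.Icc 0 R) (hk : 1 ≤ k) (hkN : k ≤ N) :
    ∫ ω : Fin N → α, kthVal k (fun i => g (ω i)) ∂(Measure.pi fun _ => μ) =
      ∫ t in 0..R, (bernsteinTail k N).eval (μ.real {a | g a < t}) := by
  have hmem (ω : Fin N → α) : kthVal k (fun i => g (ω i)) ∈ Set.Icc 0 R := by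
    obtain ⟨i, hi⟩ := kthVal_mem_range hk hkN fun i => g (ω i)
    exact hi ▸ hgR (ω i)
  have hmeas : Measurable fun ω : Fin N → α => kthVal k (fun i => g (ω i)) :=
    (measurable_kthVal hk hkN).comp
      (measurable_pi_lambda _ fun i => hg.comp (measurable_pi_apply i))
  have hR : 0 ≤ R := by
    obtain ⟨a⟩ := nonempty_of_isProbabilityMeasure μ
    exact (hgR a).1.trans (hgR a).2
  have hint : Integrable (fun ω : Fin N → α => kthVal k (fun i => g (ω i)))
      (Measure.pi fun _ => μ) :=
    .of_bound hmeas.aestronglyMeasurable R <| .of_forall fun ω => by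
      rw [Real.norm_of_nonneg (hmem ω).1]
      exact (hmem ω).2
  rw [hint.integral_eq_integral_Ioc_meas_le (.of_forall fun ω => (hmem ω).1)
    (.of_forall fun ω => (hmem ω).2), intervalIntegral.integral_of_le hR]
  congr 1 with t
  simp only [le_kthVal_iff hk hkN]
  simpa using measureReal_pi_ncard_lt (ι := Fin N) (μ := μ) (measurableSet_lt hg measurable_const) k

end Expectation

section Comparison

variable {k N : ℕ} {p p₀ R r δ c : ℝ}

theorem bernsteinTail_eval_le_two_pow_mul (hp₀ : 0 ≤ p₀) (hp : p ∈ Set.Icc p₀ 1) (hkN : k ≤ N) :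
    (bernsteinTail k N).eval p ≤ 2 ^ k * (1 - p₀ / 2) ^ N := by
  have hp' : p ∈ Set.Icc 0 1 := ⟨hp₀.trans hp.1, hp.2⟩
  have hchernoff := pow_mul_bernsteinTail_eval_le hp' (z := 1 / 2) (by norm_num) hkN
  calc (bernsteinTail k N).eval p
      = 2 ^ k * ((1 / 2) ^ k * (bernsteinTail k N).eval p) := by
        rw [← mul_assoc, ← mul_pow, mul_one_div_cancel two_ne_zero, one_pow, one_mul]
    _ ≤ 2 ^ k * (1 - p + 1 / 2 * p) ^ N := by gcongr
    _ ≤ 2 ^ k * (1 - p₀ / 2) ^ N := by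
        have hbase : 0 ≤ 1 - p + 1 / 2 * p := by linarith [hp.2]
        gcongr
        linarith [hp.1]

theorem intervalIntegrable_bernsteinTail {F : ℝ → ℝ} (hR : 0 ≤ R)
    (hF : MonotoneOn F (Set.Icc 0 R)) (hF' : Set.MapsTo F (Set.Icc 0 R) (Set.Icc 0 1)) (k N : ℕ) :
    IntervalIntegrable (fun t => (bernsteinTail k N).eval (F t)) volume 0 R := by
  refine AntitoneOn.intervalIntegrable ?_
  rw [Set.uIcc_of_le hR]
  exact fun s hs t ht hst => antitoneOn_bernsteinTail k N (hF' hs) (hF' ht) (hF hs ht hst)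

theorem abs_integral_bernsteinTail_sub_le {F G : ℝ → ℝ} (hr : r ∈ Set.Icc 0 R)
    (hF : MonotoneOn F (Set.Icc 0 R)) (hF' : Set.MapsTo F (Set.Icc 0 R) (Set.Icc 0 1))
    (hG : MonotoneOn G (Set.Icc 0 R)) (hG' : Set.MapsTo G (Set.Icc 0 R) (Set.Icc 0 1))
    (hFG : Set.EqOn F G (Set.Icc 0 r)) (hkN : k ≤ N) :
    |(∫ t in 0..R, (bernsteinTail k N).eval (F t)) -
        ∫ t in 0..R, (bernsteinTail k N).eval (G t)| ≤ R * 2 ^ k * (1 - F r / 2) ^ N := by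
  have hR : 0 ≤ R := hr.1.trans hr.2
  have hFr : F r = G r := hFG ⟨hr.1, le_rfl⟩
  have hρ : 0 ≤ 1 - F r / 2 := by linarith [(hF' hr).2]
  have hpointwise : ∀ t ∈ Set.uIoc 0 R,
      ‖(bernsteinTail k N).eval (F t) - (bernsteinTail k N).eval (G t)‖ ≤
        2 ^ k * (1 - F r / 2) ^ N := by
    intro t ht
    rw [Set.uIoc_of_le hR] at ht
    have htR : t ∈ Set.Icc 0 R := Set.Ioc_subset_Icc_self ht
    rcases le_total t r with htr | hrt
    · rw [hFG ⟨htR.1, htr⟩, sub_self, norm_zero]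
      positivity
    · have hFt := bernsteinTail_eval_le_two_pow_mul (hF' hr).1 ⟨hF hr htR hrt, (hF' htR).2⟩ hkN
      have hGt := bernsteinTail_eval_le_two_pow_mul (hF' hr).1
        ⟨hFr ▸ hG hr htR hrt, (hG' htR).2⟩ hkN
      exact abs_sub_le_of_nonneg_of_le (bernsteinTail_eval_nonneg (hF' htR) k N) hFt
        (bernsteinTail_eval_nonneg (hG' htR) k N) hGt
  rw [← intervalIntegral.integral_sub (intervalIntegrable_bernsteinTail hR hF hF' k N)
    (intervalIntegrable_bernsteinTail hR hG hG' k N)]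
  calc _ ≤ 2 ^ k * (1 - F r / 2) ^ N * |R - 0| :=
        intervalIntegral.norm_integral_le_of_norm_le_const hpointwise
    _ = R * 2 ^ k * (1 - F r / 2) ^ N := by rw [sub_zero, abs_of_nonneg hR]; ring

theorem integral_bernsteinTail_min_rpow (hkN : k ≤ N) (hδ : 0 < δ) (hc : 0 < c)
    (hR : c⁻¹ ≤ R) :
    ∫ t in 0..R, (bernsteinTail k N).eval (min ((c * t) ^ δ) 1) =
      c⁻¹ * ∫ s in (0 : ℝ)..1, (bernsteinTail k N).eval (s ^ δ) := by
  have hcont : Continuous fun s : ℝ => (bernsteinTail k N).eval (min (s ^ δ) 1) :=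
    (bernsteinTail k N).continuous.comp ((Real.continuous_rpow_const hδ.le).min continuous_const)
  have hcR : 1 ≤ c * R := by rwa [inv_le_iff_one_le_mul₀' hc] at hR
  have hhead : ∫ s in (0 : ℝ)..1, (bernsteinTail k N).eval (min (s ^ δ) 1) =
      ∫ s in (0 : ℝ)..1, (bernsteinTail k N).eval (s ^ δ) := by
    refine intervalIntegral.integral_congr fun s hs => ?_
    rw [Set.uIcc_of_le zero_le_one] at hs
    simp only [min_eq_left (Real.rpow_le_one hs.1 hs.2 hδ.le)]
  have htail : ∫ s in 1..c * R, (bernsteinTail k N).eval (min (s ^ δ) 1) = 0 := by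
    refine intervalIntegral.integral_zero_ae (.of_forall fun s hs => ?_)
    rw [Set.uIoc_of_le hcR] at hs
    rw [min_eq_right (Real.one_le_rpow hs.1.le hδ.le), bernsteinTail_eval_one hkN]
  rw [intervalIntegral.integral_comp_mul_left
      (fun s => (bernsteinTail k N).eval (min (s ^ δ) 1)) hc.ne', mul_zero, smul_eq_mul,
    ← intervalIntegral.integral_add_adjacent_intervals (hcont.intervalIntegrable 0 1)
      (hcont.intervalIntegrable 1 (c * R)), hhead, htail, add_zero]

theorem exists_abs_integral_kthVal_sub_le_of_rpow_cdf {α : Type*} [MeasurableSpace α]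
    {μ : Measure α} [IsProbabilityMeasure μ] {g : α → ℝ} (hg : Measurable g)
    (hgR : ∀ a, g a ∈ Set.Icc 0 R) (hδ : 0 < δ) (hc : 0 < c) (hr : 0 < r)
    (hcdf : ∀ t ∈ Set.Icc 0 r, μ.real {a | g a < t} = (c * t) ^ δ) (hk : 1 ≤ k) :
    ∃ C > 0, ∃ ρ ∈ Set.Ioo (0 : ℝ) 1, ∀ N : ℕ, k ≤ N →
      |(∫ ω : Fin N → α, kthVal k (fun i => g (ω i)) ∂(Measure.pi fun _ => μ)) -
          c⁻¹ * (Real.Gamma (k + 1 / δ) / Real.Gamma k) *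
            (Real.Gamma (N + 1) / Real.Gamma (N + 1 + 1 / δ))| ≤ C * ρ ^ N := by
  let F (t : ℝ) : ℝ := μ.real {a | g a < t}
  let G (t : ℝ) : ℝ := min ((c * t) ^ δ) 1
  let S : ℝ := max R c⁻¹
  have hFr : F r = (c * r) ^ δ := hcdf r ⟨hr.le, le_rfl⟩
  have hFr₀ : 0 < F r := hFr ▸ Real.rpow_pos_of_pos (mul_pos hc hr) δ
  have hFr₁ : F r ≤ 1 := measureReal_le_one
  have hcr : c * r ≤ 1 := le_of_not_gt fun h => hFr₁.not_gt (hFr ▸ Real.one_lt_rpow h hδ)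
  have hrS : r ∈ Set.Icc 0 S :=
    ⟨hr.le, ((le_inv_mul_iff₀ hc).2 hcr).trans (by simp [S])⟩
  have hS : 0 < S := hr.trans_le hrS.2
  have hF : Monotone F := fun s t hst => measureReal_mono fun a (ha : g a < s) => ha.trans_le hst
  have hG : MonotoneOn G (Set.Icc 0 S) := fun s hs t _ hst =>
    min_le_min_right 1 <| Real.rpow_le_rpow (mul_nonneg hc.le hs.1)
      (mul_le_mul_of_nonneg_left hst hc.le) hδ.le
  have hG' : Set.MapsTo G (Set.Icc 0 S) (Set.Icc 0 1) := fun t ht =>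
    ⟨le_min (Real.rpow_nonneg (mul_nonneg hc.le ht.1) δ) zero_le_one, min_le_right _ _⟩
  have hFG : Set.EqOn F G (Set.Icc 0 r) := fun t ht => by
    simp only [F, G]
    rw [← hcdf t ht, min_eq_left measureReal_le_one]
  refine ⟨S * 2 ^ k, mul_pos hS (pow_pos two_pos k), 1 - F r / 2, ⟨by linarith, by linarith⟩,
    fun N hkN => ?_⟩
  rw [integral_kthVal_eq_integral_bernsteinTail hg
      (fun a => ⟨(hgR a).1, (hgR a).2.trans (le_max_left R c⁻¹)⟩) hk hkN,
    mul_assoc, ← integral_bernsteinTail_rpow hk (Nat.le_succ_of_le hkN) hδ,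
    ← integral_bernsteinTail_min_rpow hkN hδ hc (le_max_right R c⁻¹)]
  exact abs_integral_bernsteinTail_sub_le hrS (hF.monotoneOn _)
    (fun t _ => ⟨measureReal_nonneg, measureReal_le_one⟩) hG hG' hFG hkN

end Comparison

section QuotientBall

open scoped Pointwise

variable {E : Type*} [SeminormedAddCommGroup E] {L : AddSubgroup E} {r : ℝ}

theorem preimage_quotientMk_ball (v : E) (r : ℝ) :
    ((↑) : E → E ⧸ L) ⁻¹' Metric.ball (v : E ⧸ L) r = ⋃ g : L, Metric.ball (g + v) r := by
  ext w
  rw [Set.mem_preimage, mem_ball_iff_norm, ← QuotientAddGroup.mk_sub,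
    QuotientAddGroup.norm_lt_iff]
  simp only [Set.mem_iUnion, mem_ball_iff_norm]
  constructor
  · rintro ⟨m, hm, hmr⟩
    refine ⟨⟨-m + (w - v), QuotientAddGroup.eq.1 hm⟩, ?_⟩
    rwa [show w - (-m + (w - v) + v) = m by abel]
  · rintro ⟨g, hg⟩
    refine ⟨w - (g + v), QuotientAddGroup.eq.2 ?_, hg⟩
    rw [show -(w - (g + v)) + (w - v) = g by abel]
    exact g.2

theorem disjoint_ball_add_ball_add (hL : ∀ g ∈ L, g ≠ 0 → 2 * r ≤ ‖g‖) (v : E) {g h : L}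
    (hgh : g ≠ h) : Disjoint (Metric.ball (g + v) r) (Metric.ball (h + v) r) := by
  refine Metric.ball_disjoint_ball ?_
  rw [dist_add_right, dist_eq_norm, ← two_mul]
  exact hL _ (g - h).2 (by simpa [sub_eq_zero] using hgh)

theorem measure_preimage_quotientMk_ball_inter [MeasurableSpace E] [BorelSpace E] {μ : Measure E}
    [μ.IsAddLeftInvariant] [Countable L] {D : Set E} (hD : IsAddFundamentalDomain L D μ)
    (hL : ∀ g ∈ L, g ≠ 0 → 2 * r ≤ ‖g‖) (v : E) :
    μ (((↑) : E → E ⧸ L) ⁻¹' Metric.ball (v : E ⧸ L) r ∩ D) = μ (Metric.ball v r) := by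
  have htranslate (g : L) : g +ᵥ Metric.ball v r = Metric.ball (g + v) r :=
    Metric.vadd_ball (g : E) v r
  simp only [preimage_quotientMk_ball, Set.iUnion_inter, hD.measure_eq_tsum (Metric.ball v r),
    htranslate]
  exact measure_iUnion₀
    (fun g h hgh => ((disjoint_ball_add_ball_add hL v hgh).mono Set.inter_subset_left
      Set.inter_subset_left).aedisjoint)
    fun g => measurableSet_ball.nullMeasurableSet.inter hD.nullMeasurableSet

end QuotientBall

section FlatTorus

open Module Submodule

/-- The standard basis of `ℝ²` as an algebraic basis: it spans the lattice of the torus over `ℤ`,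
and its `ZSpan.fundamentalDomain` is the unit square `[0, 1)²`. -/
abbrev torusBasis : Basis (Fin 2) ℝ (EuclideanSpace ℝ (Fin 2)) :=
  (EuclideanSpace.basisFun (Fin 2) ℝ).toBasis

theorem torusLattice_eq_span :
    TorusLattice = (span ℤ (Set.range torusBasis)).toAddSubgroup := by
  ext v
  rw [mem_toAddSubgroup, Basis.mem_span_iff_repr_mem]
  simp [TorusLattice, eq_comm]

instance : Countable TorusLattice := by
  rw [torusLattice_eq_span]
  exact inferInstanceAs (Countable (span ℤ (Set.range torusBasis)))

theorem isAddFundamentalDomain_torusLattice :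
    IsAddFundamentalDomain TorusLattice (ZSpan.fundamentalDomain torusBasis) := by
  rw [torusLattice_eq_span]
  exact ZSpan.isAddFundamentalDomain' torusBasis volume

theorem one_le_norm_of_mem_torusLattice {v : EuclideanSpace ℝ (Fin 2)} (hv : v ∈ TorusLattice)
    (hv₀ : v ≠ 0) : 1 ≤ ‖v‖ := by
  obtain ⟨i, hi⟩ : ∃ i, v i ≠ 0 := by
    contrapose! hv₀
    ext i
    exact hv₀ i
  obtain ⟨m, hm⟩ := hv i
  have hm₀ : m ≠ 0 := by
    rintro rfl
    exact hi (by simpa using hm)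
  calc (1 : ℝ) ≤ |(m : ℝ)| := by exact_mod_cast Int.one_le_abs hm₀
    _ = ‖v i‖ := by rw [hm, Real.norm_eq_abs]
    _ ≤ ‖v‖ := PiLp.norm_apply_le v i

theorem torus_norm_le_two (x : Torus) : ‖x‖ ≤ 2 := by
  obtain ⟨v, rfl⟩ := QuotientAddGroup.mk_surjective x
  let w : EuclideanSpace ℝ (Fin 2) := ZSpan.fract torusBasis v
  have hfloor : v - w = ZSpan.floor torusBasis v := sub_sub_cancel v _
  have hvw : (v : Torus) = w := by
    rw [QuotientAddGroup.eq, neg_add_eq_sub, ← neg_mem_iff, neg_sub, hfloor, torusLattice_eq_span]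
    exact (ZSpan.floor torusBasis v).2
  calc ‖(v : Torus)‖ = ‖(w : Torus)‖ := by rw [hvw]
    _ ≤ ‖w‖ := QuotientAddGroup.norm_mk_le_norm
    _ ≤ ∑ i, ‖torusBasis i‖ := ZSpan.norm_fract_le torusBasis v
    _ = 2 := by simp

theorem torusMeasure_eq_map : torusMeasure =
    (volume.restrict (ZSpan.fundamentalDomain torusBasis)).map ((↑) : _ → Torus) := by
  have hsquare : {v : EuclideanSpace ℝ (Fin 2) | ∀ i, v i ∈ Set.Ico (0 : ℝ) 1} =
      ZSpan.fundamentalDomain torusBasis := by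
    ext v
    simp [ZSpan.mem_fundamentalDomain]
  rw [torusMeasure, hsquare]
  rfl

instance : IsProbabilityMeasure torusMeasure := by
  have hvolume : volume (ZSpan.fundamentalDomain torusBasis) = 1 := by
    rw [measure_congr (ZSpan.fundamentalDomain_ae_parallelepiped torusBasis volume)]
    simpa using (EuclideanSpace.basisFun (Fin 2) ℝ).volume_parallelepiped
  have : IsProbabilityMeasure (volume.restrict (ZSpan.fundamentalDomain torusBasis)) :=
    ⟨by rw [Measure.restrict_apply_univ, hvolume]⟩
  rw [torusMeasure_eq_map]
  exact Measure.isProbabilityMeasure_map QuotientAddGroup.continuous_mk.aemeasurable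

theorem torusMeasure_real_dist_lt (x : Torus) {r : ℝ} (hr : r ∈ Set.Icc 0 (1 / 2)) :
    torusMeasure.real {y | dist x y < r} = (√Real.pi * r) ^ (2 : ℝ) := by
  obtain ⟨v, rfl⟩ := QuotientAddGroup.mk_surjective x
  have hball : {y : Torus | dist ↑v y < r} = Metric.ball ↑v r := by
    ext y
    rw [Set.mem_ofPred_eq, dist_comm, Metric.mem_ball]
  have hsep : ∀ g ∈ TorusLattice, g ≠ 0 → 2 * r ≤ ‖g‖ := fun g hg hg₀ =>
    (by linarith [hr.2] : 2 * r ≤ 1).trans (one_le_norm_of_mem_torusLattice hg hg₀)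
  have hvolume : torusMeasure (Metric.ball ↑v r) = volume (Metric.ball v r) := by
    have hmk := (QuotientAddGroup.continuous_mk (N := TorusLattice)).measurable
    rw [torusMeasure_eq_map, Measure.map_apply hmk measurableSet_ball,
      Measure.restrict_apply (hmk measurableSet_ball),
      measure_preimage_quotientMk_ball_inter isAddFundamentalDomain_torusLattice hsep]
  rw [hball, Measure.real, hvolume, EuclideanSpace.volume_ball_fin_two, Real.rpow_two, mul_pow,
    Real.sq_sqrt Real.pi_pos.le, mul_comm]
  simp [ENNReal.toReal_ofReal hr.1, Real.pi_pos.le]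

end FlatTorus

/-- Fix a point `x` of the flat unit torus `T = ℝ²/ℤ²` and an integer `k ≥ 1`.
With `D_k(N)` the `k`-th smallest of the distances from `x` to `N` i.i.d. uniform sites
(product of Haar measures on `Fin N → T`), there exist `C > 0` and `ρ ∈ (0,1)` such that for
all `N ≥ k`:
`|E[D_k(N)] − (1/√π) (Γ(k+1/2)/Γ(k)) (Γ(N+1)/Γ(N+3/2))| ≤ C ρ^N`.
In particular, on the flat torus the `k`- and `N`-dependences separate to all orders in `1/N`. -/
theorem torus_kth_nearest_distance (x : Torus) (k : ℕ) (hk : 1 ≤ k) :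
    ∃ C > 0, ∃ ρ ∈ Set.Ioo (0:ℝ) 1, ∀ N : ℕ, k ≤ N →
      |(∫ ω : Fin N → Torus, kthVal k (fun i => dist x (ω i))
            ∂(Measure.pi fun _ : Fin N => torusMeasure)) -
          (Real.sqrt Real.pi)⁻¹ * (Real.Gamma (k + 1/2) / Real.Gamma k) *
            (Real.Gamma (N + 1) / Real.Gamma (N + 3/2))| ≤ C * ρ ^ N := by
  obtain ⟨C, hC, ρ, hρ, hbound⟩ :=
    exists_abs_integral_kthVal_sub_le_of_rpow_cdf (μ := torusMeasure) (g := dist x)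
      (continuous_const.dist continuous_id).measurable
      (fun y => ⟨dist_nonneg, dist_eq_norm x y ▸ torus_norm_le_two (x - y)⟩) two_pos
      (Real.sqrt_pos.2 Real.pi_pos) one_half_pos (fun _ => torusMeasure_real_dist_lt x) hk
  refine ⟨C, hC, ρ, hρ, fun N hkN => ?_⟩
  have hN : (N + 3 / 2 : ℝ) = N + 1 + 1 / 2 := by ring
  rw [hN]
  exact hbound N hkN

end
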